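/- Let u : ℝ² → ℝ be a smooth function of (t,x), set m = u − u_xx, and suppose that at every point m_t − 2 u u_x m + ∂_x( (u² − 3u_x²) m ) = 0. Define Φ = ( u³ − u u_x² − (u² − 3u_x²) m + u_tx )² − ( u² u_x − u_x³ + u_t )². Then ∂_x Φ = 0 at every point; that is, this multi-peakon equation admits a purely spatial conservation law. -/

import Mathlib

open Real

noncomputable section

/-- Partial derivative in the first (time) variable. -/
def pt (f : ℝ → ℝ → ℝ) (t x : ℝ) : ℝ := deriv (fun s => f s x) t

/-- Partial derivative in the second (space) variable. -/
def px (f : ℝ → ℝ → ℝ) (t x : ℝ) : ℝ := deriv (fun y => f t y) x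

/-- The momentum variable `m = u - u_xx`. -/
def mf (u : ℝ → ℝ → ℝ) (t x : ℝ) : ℝ := u t x - px (px u) t x

/-!
The equation is the Helmholtz image of a material derivative: for
`w = u_t + (u² - u_x²) u_x`, every `C³` function `u` satisfies
`w - w_xx = m_t - 2 u u_x m + ∂_x((u² - 3u_x²) m)`. Moreover the first square in `Φ` is `w_x²`,
so `Φ = w_x² - w²` and `∂_x Φ = -2 w_x (w - w_xx)`, which vanishes on solutions.
-/

section PartialDerivatives

variable {f : ℝ → ℝ → ℝ} {m n : WithTop ℕ∞}

theorem hasDerivAt_fderiv_snd (hf : Differentiable ℝ (Function.uncurry f)) (t x : ℝ) :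
    HasDerivAt (f t) (fderiv ℝ (Function.uncurry f) (t, x) (0, 1)) x :=
  (hf (t, x)).hasFDerivAt.comp_hasDerivAt x
    ((hasDerivAt_const x t).prodMk (hasDerivAt_id x))

theorem hasDerivAt_fderiv_fst (hf : Differentiable ℝ (Function.uncurry f)) (t x : ℝ) :
    HasDerivAt (fun s => f s x) (fderiv ℝ (Function.uncurry f) (t, x) (1, 0)) t :=
  (hf (t, x)).hasFDerivAt.comp_hasDerivAt (f := fun s => (s, x)) t
    ((hasDerivAt_id t).prodMk (hasDerivAt_const t x))

theorem hasDerivAt_px (hf : Differentiable ℝ (Function.uncurry f)) (t x : ℝ) :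
    HasDerivAt (f t) (px f t x) x :=
  (hasDerivAt_fderiv_snd hf t x).differentiableAt.hasDerivAt

theorem hasDerivAt_pt (hf : Differentiable ℝ (Function.uncurry f)) (t x : ℝ) :
    HasDerivAt (fun s => f s x) (pt f t x) t :=
  (hasDerivAt_fderiv_fst hf t x).differentiableAt.hasDerivAt

theorem uncurry_px_eq_fderiv (hf : Differentiable ℝ (Function.uncurry f)) :
    Function.uncurry (px f) = fun p => fderiv ℝ (Function.uncurry f) p (0, 1) :=
  funext fun p => (hasDerivAt_fderiv_snd hf p.1 p.2).deriv

theorem uncurry_pt_eq_fderiv (hf : Differentiable ℝ (Function.uncurry f)) :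
    Function.uncurry (pt f) = fun p => fderiv ℝ (Function.uncurry f) p (1, 0) :=
  funext fun p => (hasDerivAt_fderiv_fst hf p.1 p.2).deriv

theorem contDiff_px (hf : ContDiff ℝ n (Function.uncurry f)) (hmn : m + 1 ≤ n) :
    ContDiff ℝ m (Function.uncurry (px f)) := by
  have hdiff : Differentiable ℝ (Function.uncurry f) :=
    (hf.of_le (le_add_self.trans hmn)).differentiable one_ne_zero
  rw [uncurry_px_eq_fderiv hdiff]
  exact (hf.fderiv_right hmn).clm_apply contDiff_const

theorem contDiff_pt (hf : ContDiff ℝ n (Function.uncurry f)) (hmn : m + 1 ≤ n) :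
    ContDiff ℝ m (Function.uncurry (pt f)) := by
  have hdiff : Differentiable ℝ (Function.uncurry f) :=
    (hf.of_le (le_add_self.trans hmn)).differentiable one_ne_zero
  rw [uncurry_pt_eq_fderiv hdiff]
  exact (hf.fderiv_right hmn).clm_apply contDiff_const

theorem px_pt_comm (hf : ContDiff ℝ 2 (Function.uncurry f)) : px (pt f) = pt (px f) := by
  funext t x
  have hpx := (contDiff_px (m := 1) hf (by norm_num)).differentiable one_ne_zero
  have hpt := (contDiff_pt (m := 1) hf (by norm_num)).differentiable one_ne_zero
  have hdiff := hf.differentiable two_ne_zero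
  have hfderiv : DifferentiableAt ℝ (fderiv ℝ (Function.uncurry f)) (t, x) :=
    (hf.fderiv_right (m := 1) (by norm_num)).differentiable one_ne_zero (t, x)
  have hsymm : IsSymmSndFDerivAt ℝ (Function.uncurry f) (t, x) :=
    hf.contDiffAt.isSymmSndFDerivAt (by simp)
  calc px (pt f) t x
      = fderiv ℝ (fderiv ℝ (Function.uncurry f)) (t, x) (0, 1) (1, 0) := by
        rw [px, (hasDerivAt_fderiv_snd hpt t x).deriv, uncurry_pt_eq_fderiv hdiff,
          fderiv_clm_apply hfderiv (by fun_prop)]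
        simp
    _ = fderiv ℝ (fderiv ℝ (Function.uncurry f)) (t, x) (1, 0) (0, 1) := hsymm _ _
    _ = pt (px f) t x := by
        rw [pt, (hasDerivAt_fderiv_fst hpx t x).deriv, uncurry_px_eq_fderiv hdiff,
          fderiv_clm_apply hfderiv (by fun_prop)]
        simp

theorem px_sq_px_sub_sq (hf : ContDiff ℝ 2 (Function.uncurry f)) (t x : ℝ) :
    px (fun t x => px f t x ^ 2 - f t x ^ 2) t x = -2 * px f t x * mf f t x := by
  have hf_x := hasDerivAt_px (hf.differentiable two_ne_zero) t x
  have hf_xx := hasDerivAt_px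
    ((contDiff_px (m := 1) hf (by norm_num)).differentiable one_ne_zero) t x
  calc px (fun t x => px f t x ^ 2 - f t x ^ 2) t x
      = 2 * px f t x * px (px f) t x - 2 * f t x * px f t x := by
        exact ((hf_xx.pow 2).sub (hf_x.pow 2)).deriv.trans (by simp)
    _ = -2 * px f t x * mf f t x := by rw [mf]; ring

theorem pt_mf (hf : Differentiable ℝ (Function.uncurry f))
    (hf_xx : Differentiable ℝ (Function.uncurry (px (px f)))) (t x : ℝ) :
    pt (mf f) t x = pt f t x - pt (px (px f)) t x :=
  ((hasDerivAt_pt hf t x).sub (hasDerivAt_pt hf_xx t x)).deriv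

end PartialDerivatives

/-- The material derivative `u_t + (u² - u_x²) u_x` of `u` along the velocity field `u² - u_x²`,
expanded as in the second square of the conserved density. -/
def materialDeriv (u : ℝ → ℝ → ℝ) (t x : ℝ) : ℝ :=
  (u t x) ^ 2 * px u t x - (px u t x) ^ 3 + pt u t x

section MaterialDerivative

variable {u : ℝ → ℝ → ℝ} {m n : WithTop ℕ∞}

theorem contDiff_materialDeriv (hu : ContDiff ℝ n (Function.uncurry u)) (hmn : m + 1 ≤ n) :
    ContDiff ℝ m (Function.uncurry (materialDeriv u)) := by
  have hu_m := hu.of_le (le_self_add.trans hmn)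
  have hpx := contDiff_px hu hmn
  exact (((hu_m.pow 2).mul hpx).sub (hpx.pow 3)).add (contDiff_pt hu hmn)

theorem px_materialDeriv (hu : ContDiff ℝ 2 (Function.uncurry u)) (t x : ℝ) :
    px (materialDeriv u) t x =
      (u t x) ^ 3 - u t x * (px u t x) ^ 2
        - ((u t x) ^ 2 - 3 * (px u t x) ^ 2) * mf u t x
        + pt (px u) t x := by
  have hu_x := hasDerivAt_px (hu.differentiable two_ne_zero) t x
  have hu_xx := hasDerivAt_px
    ((contDiff_px (m := 1) hu (by norm_num)).differentiable one_ne_zero) t x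
  have hu_tx := hasDerivAt_px
    ((contDiff_pt (m := 1) hu (by norm_num)).differentiable one_ne_zero) t x
  calc px (materialDeriv u) t x
      = 2 * u t x * px u t x * px u t x + (u t x) ^ 2 * px (px u) t x
          - 3 * (px u t x) ^ 2 * px (px u) t x + px (pt u) t x := by
        exact ((((hu_x.pow 2).mul hu_xx).sub (hu_xx.pow 3)).add hu_tx).deriv.trans (by simp)
    _ = _ := by rw [px_pt_comm hu, mf]; ring

theorem mf_materialDeriv (hu : ContDiff ℝ 3 (Function.uncurry u)) (t x : ℝ) :
    mf (materialDeriv u) t x =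
      pt (mf u) t x
        - 2 * u t x * px u t x * mf u t x
        + px (fun t' x' => ((u t' x') ^ 2 - 3 * (px u t' x') ^ 2) * mf u t' x') t x := by
  set flux : ℝ → ℝ → ℝ := fun t' x' => ((u t' x') ^ 2 - 3 * (px u t' x') ^ 2) * mf u t' x'
  have hu₁ : ContDiff ℝ 1 (Function.uncurry u) := hu.of_le (by norm_num)
  have hu₂ : ContDiff ℝ 2 (Function.uncurry u) := hu.of_le (by norm_num)
  have hpx₂ : ContDiff ℝ 2 (Function.uncurry (px u)) := contDiff_px hu (by norm_num)
  have hpx₁ : ContDiff ℝ 1 (Function.uncurry (px u)) := hpx₂.of_le (by norm_num)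
  have hpxx₁ : ContDiff ℝ 1 (Function.uncurry (px (px u))) := contDiff_px hpx₂ (by norm_num)
  have hflux : ContDiff ℝ 1 (Function.uncurry flux) :=
    ((hu₁.pow 2).sub (contDiff_const.mul (hpx₁.pow 2))).mul (hu₁.sub hpxx₁)
  have hu_x := hasDerivAt_px (hu₁.differentiable one_ne_zero) t x
  have hu_xx := hasDerivAt_px (hpx₁.differentiable one_ne_zero) t x
  have hflux_x := hasDerivAt_px (hflux.differentiable one_ne_zero) t x
  have hu_xtx := hasDerivAt_px
    ((contDiff_pt (m := 1) hpx₂ (by norm_num)).differentiable one_ne_zero) t x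
  have hpx_eq : px (materialDeriv u) =
      fun t x => (u t x) ^ 3 - u t x * (px u t x) ^ 2 - flux t x + pt (px u) t x :=
    funext₂ (px_materialDeriv hu₂)
  have hpxx : px (px (materialDeriv u)) t x =
      3 * (u t x) ^ 2 * px u t x
        - (px u t x * (px u t x) ^ 2 + u t x * (2 * px u t x * px (px u) t x))
        - px flux t x + pt (px (px u)) t x := by
    rw [hpx_eq, ← px_pt_comm hpx₂]
    exact ((((hu_x.pow 3).sub (hu_x.mul (hu_xx.pow 2))).sub hflux_x).add hu_xtx).deriv.trans
      (by simp)
  have hmf_t := pt_mf (hu₁.differentiable one_ne_zero) (hpxx₁.differentiable one_ne_zero) t x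
  rw [mf, hpxx, hmf_t, materialDeriv, mf]
  ring

end MaterialDerivative

theorem purely_spatial_conservation_law_general
    {u : ℝ → ℝ → ℝ} (hu : ContDiff ℝ 3 (Function.uncurry u)) {t x : ℝ}
    (heq :
      pt (mf u) t x
        - 2 * u t x * px u t x * mf u t x
        + px (fun t' x' => ((u t' x') ^ 2 - 3 * (px u t' x') ^ 2) * mf u t' x') t x = 0) :
    px (fun t' x' =>
        ((u t' x') ^ 3 - u t' x' * (px u t' x') ^ 2
            - ((u t' x') ^ 2 - 3 * (px u t' x') ^ 2) * mf u t' x'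
            + pt (px u) t' x') ^ 2
          - ((u t' x') ^ 2 * px u t' x' - (px u t' x') ^ 3 + pt u t' x') ^ 2) t x = 0 := by
  have hmf : mf (materialDeriv u) t x = 0 := (mf_materialDeriv hu t x).trans heq
  have hspatial := px_sq_px_sub_sq (contDiff_materialDeriv hu (by norm_num)) t x
  rw [hmf, mul_zero] at hspatial
  simpa only [px_materialDeriv (hu.of_le (by norm_num)), materialDeriv] using hspatial

/-- a purely spatial conservation law for the equation
`m_t - 2 u u_x m + ∂_x((u² - 3u_x²) m) = 0`. -/
theorem purely_spatial_conservation_law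
    (u : ℝ → ℝ → ℝ) (hu : ContDiff ℝ (⊤ : ℕ∞) (Function.uncurry u))
    (heq : ∀ t x : ℝ,
      pt (mf u) t x
        - 2 * u t x * px u t x * mf u t x
        + px (fun t' x' => ((u t' x')^2 - 3 * (px u t' x')^2) * mf u t' x') t x = 0) :
    ∀ t x : ℝ,
      px (fun t' x' =>
          ((u t' x')^3 - u t' x' * (px u t' x')^2
              - ((u t' x')^2 - 3 * (px u t' x')^2) * mf u t' x'
              + pt (px u) t' x')^2
            - ((u t' x')^2 * px u t' x' - (px u t' x')^3 + pt u t' x')^2) t x = 0 :=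
  fun t x => purely_spatial_conservation_law_general (contDiff_infty.1 hu 3) (heq t x)

end
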